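/- Every c-monotone drawing of K_n contains a plane path on at least ⌈√n⌉ vertices; that is, a sequence of at least ⌈√n⌉ distinct vertices in which the edges joining consecutive vertices pairwise do not cross. -/

import Mathlib

/-!
Let `O` be a centre of c-monotonicity. The vertices lie on pairwise different rays from `O`, so
they have distinct angles `θ i` in `(-π, π]`. An edge turns monotonically around `O`, by less than
a full turn; hence for `θ i < θ j` the edge `ij` is, in log-polar coordinates, the graph of a
continuous function either over `[θ i, θ j]` (the edge is blue) or over `[θ j, θ i + 2π]` (the
edge is red: it crosses the ray of angle `π`). This is `polarGraph_or`, which lifts the edge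
through the covering map `Complex.exp`.

If `θ i < θ j < θ k` and `ij`, `jk` are red, then so is `ik`: otherwise the triangle `ijk` would be
a closed curve without self-intersections winding twice around `O` (`winding`, proved by the
intermediate value theorem). So red is a partial order on the vertices, and among more than `k ^ 2`
vertices there are `k + 1` that span only red or only blue edges (`exists_homogeneous`).

If all edges are blue, the path through the vertices in angular order is plane, because
non-consecutive edges occupy disjoint sectors. If all edges are red, the zigzag path
`0, h, 1, h + 1, 2, …` with `h` half the number of vertices, rounded up, is plane: two of its
non-consecutive edges are `ik` and `jl` with `θ i < θ j < θ k < θ l`, and such edges are disjoint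
(`ne_of_four`). Indeed `il` starts with `jl` and ends with `ik`. If it lies between `ik` and
`jl`, these are separated. If not, then the same comparisons propagated along the edges that share
a vertex force `ij` and `kl` to meet at two different angles (`no_double_meet`), which a simple
drawing forbids.
-/

open Set

/-- Points of the plane. -/
abbrev Pt : Type := ℝ × ℝ

/-- `A` is a simple (continuous, injective) arc from `p` to `q`. -/
def IsSimpleArc (A : Set Pt) (p q : Pt) : Prop :=
  ∃ f : ℝ → Pt, ContinuousOn f (Set.Icc 0 1) ∧ Set.InjOn f (Set.Icc 0 1) ∧
    f 0 = p ∧ f 1 = q ∧ A = f '' Set.Icc 0 1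

/-- A simple drawing of the complete graph `K n` in the plane:  vertices are distinct
points, edges are simple arcs connecting their endpoints, no edge passes through a
vertex other than its endpoints, two edges sharing an endpoint meet exactly in that
endpoint, and two independent edges meet in at most one point. -/
structure SimpleDrawing (n : ℕ) where
  vtx : Fin n → Pt
  vtx_inj : Function.Injective vtx
  arc : Fin n → Fin n → Set Pt
  arc_symm : ∀ i j, arc i j = arc j i
  arc_simple : ∀ i j, i ≠ j → IsSimpleArc (arc i j) (vtx i) (vtx j)
  vtx_not_mem : ∀ i j k, i ≠ j → k ≠ i → k ≠ j → vtx k ∉ arc i j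
  adj_inter : ∀ i j k, i ≠ j → i ≠ k → j ≠ k → arc i j ∩ arc i k = {vtx i}
  indep_inter : ∀ i j k l, i ≠ j → k ≠ l → i ≠ k → i ≠ l → j ≠ k → j ≠ l →
    (arc i j ∩ arc k l).Subsingleton

namespace SimpleDrawing

variable {n : ℕ}

/-- The union of all edges of the drawing. -/
def drawingSet (D : SimpleDrawing n) : Set Pt :=
  ⋃ (i : Fin n) (j : Fin n) (_ : i ≠ j), D.arc i j

/-- The edges `v_i v_j` and `v_k v_l` cross: they meet in a point that is not a common
endpoint of the two edges. -/
def Crosses (D : SimpleDrawing n) (i j k l : Fin n) : Prop :=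
  ∃ x : Pt, x ∈ D.arc i j ∧ x ∈ D.arc k l ∧
    ¬ ((x = D.vtx i ∨ x = D.vtx j) ∧ (x = D.vtx k ∨ x = D.vtx l))

end SimpleDrawing

/-- The ray emanating from `O` in direction `d`. -/
def rayFrom (O d : Pt) : Set Pt := {x : Pt | ∃ t : ℝ, 0 ≤ t ∧ x = O + t • d}

namespace SimpleDrawing

/-- `D` is c-monotone with respect to the point `O`: `O` does not lie on the drawing and
every ray emanating from `O` meets every edge of `D` in at most one point. -/
def CMonotoneAt (D : SimpleDrawing n) (O : Pt) : Prop :=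
  O ∉ D.drawingSet ∧
    ∀ d : Pt, d ≠ 0 → ∀ i j : Fin n, i ≠ j → (rayFrom O d ∩ D.arc i j).Subsingleton

/-- `D` is c-monotone. -/
def CMonotone (D : SimpleDrawing n) : Prop := ∃ O : Pt, D.CMonotoneAt O

/-- `D` is generalized twisted with respect to `O` and the ray from `O` with direction `d`:
`D` is c-monotone with respect to `O` and the ray meets every edge of `D`. -/
def GenTwistedAt (D : SimpleDrawing n) (O d : Pt) : Prop :=
  D.CMonotoneAt O ∧ d ≠ 0 ∧ ∀ i j : Fin n, i ≠ j → (rayFrom O d ∩ D.arc i j).Nonempty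

/-- `D` is generalized twisted. -/
def GenTwisted (D : SimpleDrawing n) : Prop := ∃ O d : Pt, D.GenTwistedAt O d

/-- The vertices `v_1, …, v_n` of `D` appear counterclockwise around `O`, at angles
`θ 0 < θ 1 < … < θ (n-1)`, all lying strictly (counterclockwise) between the angle `φ`
of the ray `r` with direction `d` and `φ + 2π`;  i.e. the vertices are labeled
counterclockwise around `O` and the ray `r` lies counterclockwise between the ray through
`v_n` and the ray through `v_1`. -/
def IsCCWLabeling (D : SimpleDrawing n) (O d : Pt) (φ : ℝ) (θ : Fin n → ℝ) : Prop :=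
  (∃ s : ℝ, 0 < s ∧ d = s • ((Real.cos φ, Real.sin φ) : Pt)) ∧
  StrictMono θ ∧
  (∀ i : Fin n, θ i ∈ Set.Ioo φ (φ + 2 * Real.pi)) ∧
  (∀ i : Fin n, ∃ s : ℝ, 0 < s ∧
    D.vtx i = O + s • ((Real.cos (θ i), Real.sin (θ i)) : Pt))

/-- `C` is a cell of `D`: a connected component of the complement of the drawing. -/
def IsCell (D : SimpleDrawing n) (C : Set Pt) : Prop :=
  ∃ x : Pt, x ∉ D.drawingSet ∧ C = connectedComponentIn D.drawingSetᶜ x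

/-- `C` is a vi-cell of `D`: a cell whose closure contains a vertex. -/
def IsViCell (D : SimpleDrawing n) (C : Set Pt) : Prop :=
  D.IsCell C ∧ ∃ i : Fin n, D.vtx i ∈ closure C

/-- The triangle of `D` on the three vertices `i`, `j`, `k` (as a subset of the plane). -/
def triangleSet (D : SimpleDrawing n) (i j k : Fin n) : Set Pt :=
  D.arc i j ∪ D.arc j k ∪ D.arc i k

/-- Two cells are antipodal if for every triangle of `D` they lie in different sides
(connected components of the complement) of that triangle. -/
def Antipodal (D : SimpleDrawing n) (C₁ C₂ : Set Pt) : Prop :=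
  ∀ i j k : Fin n, i ≠ j → j ≠ k → i ≠ k →
    ∀ x ∈ C₁, ∀ y ∈ C₂,
      connectedComponentIn (D.triangleSet i j k)ᶜ x ≠
        connectedComponentIn (D.triangleSet i j k)ᶜ y

/-- `D` and `E` are weakly isomorphic: some bijection of the vertices preserves
crossing pairs of edges. -/
def WeaklyIso (D E : SimpleDrawing n) : Prop :=
  ∃ σ : Fin n ≃ Fin n, ∀ i j k l : Fin n, i ≠ j → k ≠ l →
    (D.Crosses i j k l ↔ E.Crosses (σ i) (σ j) (σ k) (σ l))

end SimpleDrawing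

/-! ### Log-polar coordinates -/

/-- The point with log-polar coordinates `(x, r)` about `O`: angle `x` and distance `exp r`
from `O`.  With the logarithm of the distance as coordinate every real `r` is allowed, and
reflecting `r ↦ -r` is a symmetry. -/
noncomputable def polarPt (O : Pt) (x r : ℝ) : Pt :=
  (O.1 + Real.exp r * Real.cos x, O.2 + Real.exp r * Real.sin x)

lemma polarPt_eq_exp (O : Pt) (z : ℂ) :
    polarPt O z.im z.re = (O.1 + (Complex.exp z).re, O.2 + (Complex.exp z).im) := by
  simp [polarPt, Complex.exp_re, Complex.exp_im]

lemma polarPt_inj {O : Pt} {x y r s : ℝ} (h : polarPt O x r = polarPt O y s) :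
    r = s ∧ ∃ m : ℤ, x = y + m * (2 * Real.pi) := by
  have h1 := polarPt_eq_exp O ⟨r, x⟩
  have h2 := polarPt_eq_exp O ⟨s, y⟩
  simp only at h1 h2
  rw [h1, h2, Prod.mk.injEq] at h
  have h3 : Complex.exp ⟨r, x⟩ = Complex.exp ⟨s, y⟩ :=
    Complex.ext (by linarith [h.1]) (by linarith [h.2])
  obtain ⟨m, hm⟩ := Complex.exp_eq_exp_iff_exists_int.1 h3
  refine ⟨by simpa using congrArg Complex.re hm, m, by simpa using congrArg Complex.im hm⟩

lemma polarPt_add (O : Pt) (x r : ℝ) (m : ℤ) :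
    polarPt O (x + m * (2 * Real.pi)) r = polarPt O x r := by
  simp [polarPt, Real.cos_add_int_mul_two_pi, Real.sin_add_int_mul_two_pi]

lemma polarPt_add_two_pi (O : Pt) (x r : ℝ) :
    polarPt O (x + 2 * Real.pi) r = polarPt O x r := by
  simp [polarPt]

lemma polarPt_mem_ray (O : Pt) (x r : ℝ) :
    polarPt O x r ∈ rayFrom O (Real.cos x, Real.sin x) :=
  ⟨Real.exp r, (Real.exp_pos r).le, by ext <;> simp [polarPt]⟩

lemma cos_sin_ne_zero (x : ℝ) : ((Real.cos x, Real.sin x) : Pt) ≠ 0 := by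
  intro h
  have h1 : Real.cos x = 0 := congrArg Prod.fst h
  have h2 : Real.sin x = 0 := congrArg Prod.snd h
  nlinarith [Real.sin_sq_add_cos_sq x]

lemma exists_polarPt {O p : Pt} (h : p ≠ O) :
    ∃ x r : ℝ, x ∈ Ioc (-Real.pi) Real.pi ∧ p = polarPt O x r := by
  have hz : (⟨p.1 - O.1, p.2 - O.2⟩ : ℂ) ≠ 0 := by
    intro h0
    apply h
    have h1 := congrArg Complex.re h0
    have h2 := congrArg Complex.im h0
    simp only [Complex.zero_re, Complex.zero_im] at h1 h2
    ext <;> linarith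
  refine ⟨(Complex.log ⟨p.1 - O.1, p.2 - O.2⟩).im, (Complex.log ⟨p.1 - O.1, p.2 - O.2⟩).re,
    ⟨Complex.neg_pi_lt_log_im _, Complex.log_im_le_pi _⟩, ?_⟩
  rw [polarPt_eq_exp, Complex.exp_log hz]
  ext <;> simp

/-- `A` is the graph, in log-polar coordinates about `O`, of a continuous function over the
angular interval `[a, b]`, with end values `ra` and `rb`.  The function is defined and continuous
on the whole line; only its restriction to `[a, b]` matters. -/
def IsPolarGraph (O : Pt) (A : Set Pt) (a ra b rb : ℝ) : Prop :=
  ∃ g : ℝ → ℝ, Continuous g ∧ g a = ra ∧ g b = rb ∧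
    A = (fun x => polarPt O x (g x)) '' Icc a b

/-- Log-polar coordinates along a path avoiding the centre: the angle lifts continuously because
the complex exponential is a covering map of the punctured plane. -/
lemma exists_polar_lift {O : Pt} (f : unitInterval → Pt) (hf : Continuous f)
    (hO : ∀ t, f t ≠ O) {a ra : ℝ} (h0 : f 0 = polarPt O a ra) :
    ∃ α ρ : unitInterval → ℝ, Continuous α ∧ Continuous ρ ∧ α 0 = a ∧ ρ 0 = ra ∧
      ∀ t, f t = polarPt O (α t) (ρ t) := by
  have hz : ∀ t, (⟨(f t).1 - O.1, (f t).2 - O.2⟩ : ℂ) ≠ 0 := by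
    intro t h0
    apply hO t
    have h1 := congrArg Complex.re h0
    have h2 := congrArg Complex.im h0
    simp only [Complex.zero_re, Complex.zero_im] at h1 h2
    ext <;> linarith
  have hc : Continuous fun t => (⟨(f t).1 - O.1, (f t).2 - O.2⟩ : ℂ) := by
    have : (fun t => (⟨(f t).1 - O.1, (f t).2 - O.2⟩ : ℂ)) =
        fun t => (((f t).1 - O.1 : ℝ) : ℂ) + (((f t).2 - O.2 : ℝ) : ℂ) * Complex.I := by
      funext t
      exact Complex.ext (by simp) (by simp)
    rw [this]
    fun_prop
  let γ : C(unitInterval, {z : ℂ // z ≠ 0}) := ⟨fun t => ⟨_, hz t⟩, hc.subtype_mk _⟩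
  have e0 : γ 0 = ⟨_, Complex.exp_ne_zero ⟨ra, a⟩⟩ := by
    apply Subtype.ext
    have := polarPt_eq_exp O ⟨ra, a⟩
    simp only at this
    rw [this] at h0
    apply Complex.ext <;> simp [γ, h0]
  obtain ⟨Γ, hΓ, hΓ0⟩ := Complex.isCoveringMap_exp.exists_path_lifts γ ⟨ra, a⟩ e0
  refine ⟨fun t => (Γ t).im, fun t => (Γ t).re, by fun_prop, by fun_prop, by simp [hΓ0],
    by simp [hΓ0], fun t => ?_⟩
  rw [polarPt_eq_exp]
  have h1 : Complex.exp (Γ t) = ⟨(f t).1 - O.1, (f t).2 - O.2⟩ :=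
    congrArg Subtype.val (congrFun hΓ t)
  rw [h1]
  ext <;> simp

/-- A c-monotone arc whose ends have angles `a < b < a + 2π` is a polar graph, either over
`[a, b]` or over the complementary interval `[b, a + 2π]`. -/
lemma polarGraph_or {O : Pt} {A : Set Pt} {p q : Pt} (hA : IsSimpleArc A p q) (hO : O ∉ A)
    (hray : ∀ d : Pt, d ≠ 0 → (rayFrom O d ∩ A).Subsingleton) {a ra b rb : ℝ}
    (hp : p = polarPt O a ra) (hq : q = polarPt O b rb) (hab : a < b)
    (hba : b < a + 2 * Real.pi) :
    IsPolarGraph O A a ra b rb ∨ IsPolarGraph O A b rb (a + 2 * Real.pi) ra := by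
  obtain ⟨f, hfc, hfi, hf0, hf1, hfA⟩ := hA
  have hmem : ∀ t : unitInterval, f t ∈ A := fun t => hfA ▸ mem_image_of_mem f t.2
  obtain ⟨α, ρ, hα, hρ, hα0, hρ0, hαρ⟩ := exists_polar_lift (O := O) (fun t => f t)
    (continuousOn_iff_continuous_domRestrict.1 hfc) (fun t ht => hO (ht ▸ hmem t))
    (a := a) (ra := ra) (by simp [hf0, hp])
  -- no two points of the arc lie on a common ray
  have hmod : ∀ s t (m : ℤ), α s = α t + m * (2 * Real.pi) → s = t := by
    intro s t m h
    have hs := hαρ s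
    rw [h, polarPt_add] at hs
    have h1 : f s = f t := hray _ (cos_sin_ne_zero (α t))
      ⟨hs ▸ polarPt_mem_ray _ _ _, hmem s⟩ ⟨hαρ t ▸ polarPt_mem_ray _ _ _, hmem t⟩
    exact Subtype.ext (hfi s.2 t.2 h1)
  have hinj : Function.Injective α := fun s t h => hmod s t 0 (by simpa using h)
  obtain ⟨g, hg⟩ := ContinuousMap.exists_extension
    (hα.isClosedEmbedding hinj) (⟨ρ, hρ⟩ : C(unitInterval, ℝ))
  have hg' : ∀ t, g (α t) = ρ t := fun t => congrArg (fun F => F t) hg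
  have hAg : A = (fun x => polarPt O x (g x)) '' range α := by
    rw [hfA, ← range_comp]
    ext x
    constructor
    · rintro ⟨t, ht, rfl⟩
      exact ⟨⟨t, ht⟩, by simp only [Function.comp, hg']; exact (hαρ _).symm⟩
    · rintro ⟨t, rfl⟩
      exact ⟨t, t.2, by simp only [Function.comp, hg']; exact (hαρ _)⟩
  have hrange : ∀ s t x, α s ≤ x → x ≤ α t → ∃ u, α u = x := fun s t x h1 h2 =>
    mem_range_of_exists_le_of_exists_ge hα ⟨s, h1⟩ ⟨t, h2⟩
  have h1 : polarPt O (α 1) (ρ 1) = polarPt O b rb := by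
    rw [← hαρ 1, ← hq]; simpa using hf1
  obtain ⟨hρ1, k, hk⟩ := polarPt_inj h1
  have hpi := Real.pi_pos
  -- the arc turns by less than a full turn
  have hlt : α 1 < a + 2 * Real.pi := by
    by_contra! hcon
    obtain ⟨u, hu⟩ := hrange 0 1 (a + 2 * Real.pi) (by linarith) hcon
    have := hmod u 0 1 (by rw [hu, hα0]; simp)
    rw [this, hα0] at hu
    linarith
  have hgt : a - 2 * Real.pi < α 1 := by
    by_contra! hcon
    obtain ⟨u, hu⟩ := hrange 1 0 (a - 2 * Real.pi) hcon (by linarith)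
    have := hmod u 0 (-1) (by rw [hu, hα0]; push_cast; ring)
    rw [this, hα0] at hu
    linarith
  have hk1 : (k : ℝ) < 1 := by
    by_contra! hcon
    nlinarith
  have hk2 : (-2 : ℝ) < k := by
    by_contra! hcon
    nlinarith
  have hk3 : k < 1 := by exact_mod_cast hk1
  have hk4 : -2 < k := by exact_mod_cast hk2
  obtain rfl | rfl : k = 0 ∨ k = -1 := by omega
  · left
    have hb : α 1 = b := by simpa using hk
    have hmono : Monotone α := by
      rcases hα.strictMono_of_inj_boundedOrder' hinj with h | h
      · exact h.monotone
      · have := h.antitone (zero_le_one (α := unitInterval))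
        linarith
    refine ⟨g, g.continuous, by rw [← hα0, hg', hρ0], by rw [← hb, hg', hρ1], ?_⟩
    rw [hAg]
    congr 1
    ext x
    constructor
    · rintro ⟨t, rfl⟩
      exact ⟨hα0 ▸ hmono t.2.1, hb ▸ hmono t.2.2⟩
    · rintro ⟨hx1, hx2⟩
      exact hrange 0 1 x (hα0 ▸ hx1) (hb ▸ hx2)
  · right
    have hb : α 1 = b - 2 * Real.pi := by rw [hk]; push_cast; ring
    have hanti : Antitone α := by
      rcases hα.strictMono_of_inj_boundedOrder' hinj with h | h
      · have := h.monotone (zero_le_one (α := unitInterval))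
        linarith
      · exact h.antitone
    -- the arc runs clockwise over `[b - 2π, a]`; shift by a full turn
    refine ⟨fun x => g (x - 2 * Real.pi), by fun_prop,
      by simp only; rw [← hb, hg', hρ1],
      by simp only [add_sub_cancel_right]; rw [← hα0, hg', hρ0], ?_⟩
    rw [hAg]
    ext p
    constructor
    · rintro ⟨_, ⟨t, rfl⟩, rfl⟩
      have h3 := hanti (show 0 ≤ t from t.2.1)
      have h4 := hanti (show t ≤ 1 from t.2.2)
      exact ⟨α t + 2 * Real.pi, ⟨by linarith, by linarith⟩,
        by simp [polarPt_add_two_pi]⟩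
    · rintro ⟨x, ⟨hx1, hx2⟩, rfl⟩
      refine ⟨x - 2 * Real.pi, hrange 1 0 _ (by linarith) (by linarith), ?_⟩
      simp only
      rw [← polarPt_add_two_pi, sub_add_cancel]

/-! ### Families of functions over angular intervals -/

lemma lt_of_forall_ne {u v : ℝ → ℝ} (hu : Continuous u) (hv : Continuous v) {x y : ℝ}
    (hne : ∀ z ∈ uIcc x y, u z ≠ v z) (hx : u x < v x) : u y < v y := by
  by_contra! hy
  obtain ⟨z, hz, h⟩ := isPreconnected_uIcc.intermediate_value₂ left_mem_uIcc right_mem_uIcc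
    hu.continuousOn hv.continuousOn hx.le hy
  exact hne z hz h

/-- If `f13` starts below `f14` and `f24` ends below it, then `f12` and `f34` meet both over
`[t4, t1 + T]` and, a full turn apart, over `[t2, t3]`, which `n12_34` excludes. -/
lemma no_double_meet {T t1 t2 t3 t4 r1 r2 r3 r4 : ℝ} {f12 f13 f14 f24 f34 : ℝ → ℝ}
    (h12 : t1 < t2) (h23 : t2 < t3) (h34 : t3 < t4) (h41 : t4 < t1 + T)
    (c12 : Continuous f12) (c13 : Continuous f13) (c24 : Continuous f24) (c34 : Continuous f34)
    (s12 : f12 t2 = r2) (e12 : f12 (t1 + T) = r1)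
    (s13 : f13 t3 = r3) (e13 : f13 (t1 + T) = r1)
    (s14 : f14 t4 = r4) (e14 : f14 (t1 + T) = r1)
    (s24 : f24 t4 = r4) (e24 : f24 (t2 + T) = r2)
    (s34 : f34 t4 = r4) (e34 : f34 (t3 + T) = r3)
    (n13_34 : ∀ x ∈ Icc t4 (t1 + T), f13 x ≠ f34 x)
    (n12_24 : ∀ x ∈ Icc t4 (t1 + T), f12 x ≠ f24 x)
    (n12_13 : ∀ x ∈ Ico t3 (t1 + T), f12 x ≠ f13 x)
    (n24_34 : ∀ x ∈ Ioc t4 (t2 + T), f24 x ≠ f34 x)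
    (n12_34 : ∀ x ∈ Icc t4 (t1 + T), ∀ y ∈ Icc t2 t3, f12 x = f34 x → f12 y ≠ f34 (y + T))
    (ha : f13 t4 < f14 t4) (hb : f24 (t1 + T) < f14 (t1 + T)) : False := by
  have l1 : f13 (t1 + T) < f34 (t1 + T) :=
    lt_of_forall_ne c13 c34 (x := t4) (by rwa [uIcc_of_le h41.le]) (by linarith)
  have l2 : f24 t4 < f12 t4 :=
    lt_of_forall_ne c24 c12 (x := t1 + T)
      (by rw [uIcc_of_ge h41.le]; exact fun z hz => (n12_24 z hz).symm) (by linarith)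
  obtain ⟨x, hx, hxe⟩ := isPreconnected_Icc.intermediate_value₂ (right_mem_Icc.2 h41.le)
    (left_mem_Icc.2 h41.le) c12.continuousOn c34.continuousOn (by linarith) (by linarith)
  have l3 : f13 t3 < f12 t3 := by
    refine lt_of_forall_ne c13 c12 (x := t4) (fun z hz => ?_) (by linarith)
    rw [uIcc_of_ge h34.le] at hz
    exact (n12_13 z ⟨hz.1, by linarith [hz.2]⟩).symm
  have l4 : f24 (t2 + T) < f34 (t2 + T) := by
    refine lt_of_forall_ne c24 c34 (x := t1 + T) (fun z hz => ?_) (by linarith)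
    rw [uIcc_of_le (by linarith)] at hz
    exact n24_34 z ⟨by linarith [hz.1], hz.2⟩
  obtain ⟨y, hy, hye⟩ := isPreconnected_Icc.intermediate_value₂ (left_mem_Icc.2 h23.le)
    (right_mem_Icc.2 h23.le) c12.continuousOn
    (g := fun y => f34 (y + T)) (by fun_prop) (by linarith) (by linarith)
  exact n12_34 x hx y hy hxe hye

/-- Four vertices with all edges through the ray: the graph of `f14` separates those of `f13` and
`f24` over their common domain. -/
lemma ne_of_four {T t1 t2 t3 t4 r1 r2 r3 r4 : ℝ} {f12 f13 f14 f24 f34 : ℝ → ℝ}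
    (h12 : t1 < t2) (h23 : t2 < t3) (h34 : t3 < t4) (h41 : t4 < t1 + T)
    (c12 : Continuous f12) (c13 : Continuous f13) (c14 : Continuous f14)
    (c24 : Continuous f24) (c34 : Continuous f34)
    (s12 : f12 t2 = r2) (e12 : f12 (t1 + T) = r1)
    (s13 : f13 t3 = r3) (e13 : f13 (t1 + T) = r1)
    (s14 : f14 t4 = r4) (e14 : f14 (t1 + T) = r1)
    (s24 : f24 t4 = r4) (e24 : f24 (t2 + T) = r2)
    (s34 : f34 t4 = r4) (e34 : f34 (t3 + T) = r3)
    (n13_14 : ∀ x ∈ Ico t4 (t1 + T), f13 x ≠ f14 x)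
    (n14_24 : ∀ x ∈ Ioc t4 (t1 + T), f14 x ≠ f24 x)
    (n13_34 : ∀ x ∈ Icc t4 (t1 + T), f13 x ≠ f34 x)
    (n12_24 : ∀ x ∈ Icc t4 (t1 + T), f12 x ≠ f24 x)
    (n12_13 : ∀ x ∈ Ico t3 (t1 + T), f12 x ≠ f13 x)
    (n24_34 : ∀ x ∈ Ioc t4 (t2 + T), f24 x ≠ f34 x)
    (n12_34 : ∀ x ∈ Icc t4 (t1 + T), ∀ y ∈ Icc t2 t3, f12 x = f34 x → f12 y ≠ f34 (y + T))
    {x : ℝ} (hx : x ∈ Icc t4 (t1 + T)) : f13 x ≠ f24 x := by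
  intro he
  have hxa : t4 < x := by
    refine lt_of_le_of_ne hx.1 ?_
    rintro rfl
    exact n13_14 t4 ⟨le_rfl, h41⟩ (by linarith)
  have hxb : x < t1 + T := by
    refine lt_of_le_of_ne hx.2 ?_
    rintro rfl
    exact n14_24 (t1 + T) ⟨h41, le_rfl⟩ (by linarith)
  have na : ∀ z ∈ uIcc x t4, f13 z ≠ f14 z := by
    rw [uIcc_of_ge hxa.le]
    exact fun z hz => n13_14 z ⟨hz.1, hz.2.trans_lt hxb⟩
  have nb : ∀ z ∈ uIcc x (t1 + T), f14 z ≠ f24 z := by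
    rw [uIcc_of_le hxb.le]
    exact fun z hz => n14_24 z ⟨hxa.trans_le hz.1, hz.2⟩
  rcases lt_or_gt_of_ne (n13_14 x ⟨hx.1, hxb⟩) with hlt | hgt
  · exact no_double_meet h12 h23 h34 h41 c12 c13 c24 c34 s12 e12 s13 e13 s14 e14 s24 e24 s34 e34
      n13_34 n12_24 n12_13 n24_34 n12_34 (lt_of_forall_ne c13 c14 na hlt)
      (lt_of_forall_ne c24 c14 (fun z hz => (nb z hz).symm) (by linarith))
  · have ha := lt_of_forall_ne c14 c13 (fun z hz => (na z hz).symm) hgt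
    have hb := lt_of_forall_ne c14 c24 nb (by linarith)
    -- the mirror image: exchange inside and outside by negating the log-radius
    exact no_double_meet (T := T) (t1 := t1) (t2 := t2) (t3 := t3) (t4 := t4)
      (r1 := -r1) (r2 := -r2) (r3 := -r3) (r4 := -r4)
      (f12 := fun x => -f12 x) (f13 := fun x => -f13 x) (f14 := fun x => -f14 x)
      (f24 := fun x => -f24 x) (f34 := fun x => -f34 x)
      h12 h23 h34 h41 (by fun_prop) (by fun_prop) (by fun_prop) (by fun_prop)
      (by simpa) (by simpa) (by simpa) (by simpa) (by simpa) (by simpa) (by simpa) (by simpa)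
      (by simpa) (by simpa) (by simpa using n13_34) (by simpa using n12_24)
      (by simpa using n12_13) (by simpa using n24_34) (by simpa using n12_34)
      (by simpa using ha) (by simpa using hb)

/-- The three edges of a triangle, two crossing the ray and one avoiding it, would form a closed
curve winding twice around the centre, and such a curve meets itself; this is the case where
`f12` lies below `f23`. -/
lemma winding_aux {T t1 t2 t3 r1 r2 r3 : ℝ} {f12 f23 g13 : ℝ → ℝ}
    (h12 : t1 < t2) (h23 : t2 < t3) (h31 : t3 < t1 + T)
    (c12 : Continuous f12) (c23 : Continuous f23) (c13 : Continuous g13)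
    (s12 : f12 t2 = r2) (e12 : f12 (t1 + T) = r1)
    (s23 : f23 t3 = r3) (e23 : f23 (t2 + T) = r2)
    (s13 : g13 t1 = r1) (e13 : g13 t3 = r3)
    (n12_23 : ∀ x ∈ Icc t3 (t1 + T), f12 x ≠ f23 x)
    (n12_13 : ∀ x ∈ Icc t2 t3, f12 x ≠ g13 x)
    (n23_13 : ∀ x ∈ Icc t1 t2, f23 (x + T) ≠ g13 x)
    (hlt : f12 t3 < f23 t3) : False := by
  have l1 : f12 (t1 + T) < f23 (t1 + T) :=
    lt_of_forall_ne c12 c23 (by rwa [uIcc_of_le h31.le]) hlt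
  have l2 : f12 t2 < g13 t2 :=
    lt_of_forall_ne c12 c13 (x := t3) (by rwa [uIcc_of_ge h23.le]) (by linarith)
  have l3 : f23 (t1 + T) < g13 t1 :=
    lt_of_forall_ne (u := fun x => f23 (x + T)) (by fun_prop) c13 (x := t2)
      (by rwa [uIcc_of_ge h12.le]) (by linarith)
  linarith

/-- A triangle cannot have exactly its edges `12` and `23` crossing the ray; see `winding_aux`. -/
lemma winding {T t1 t2 t3 r1 r2 r3 : ℝ} {f12 f23 g13 : ℝ → ℝ}
    (h12 : t1 < t2) (h23 : t2 < t3) (h31 : t3 < t1 + T)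
    (c12 : Continuous f12) (c23 : Continuous f23) (c13 : Continuous g13)
    (s12 : f12 t2 = r2) (e12 : f12 (t1 + T) = r1)
    (s23 : f23 t3 = r3) (e23 : f23 (t2 + T) = r2)
    (s13 : g13 t1 = r1) (e13 : g13 t3 = r3)
    (n12_23 : ∀ x ∈ Icc t3 (t1 + T), f12 x ≠ f23 x)
    (n12_13 : ∀ x ∈ Icc t2 t3, f12 x ≠ g13 x)
    (n23_13 : ∀ x ∈ Icc t1 t2, f23 (x + T) ≠ g13 x) : False := by
  rcases lt_or_gt_of_ne (n12_23 t3 ⟨le_rfl, h31.le⟩) with hlt | hgt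
  · exact winding_aux h12 h23 h31 c12 c23 c13 s12 e12 s23 e23 s13 e13 n12_23 n12_13 n23_13 hlt
  · exact winding_aux (T := T) (t1 := t1) (t2 := t2) (t3 := t3)
      (r1 := -r1) (r2 := -r2) (r3 := -r3)
      (f12 := fun x => -f12 x) (f23 := fun x => -f23 x) (g13 := fun x => -g13 x)
      h12 h23 h31 (by fun_prop) (by fun_prop) (by fun_prop) (by simpa) (by simpa) (by simpa)
      (by simpa) (by simpa) (by simpa) (by simpa using n12_23) (by simpa using n12_13)
      (by simpa using n23_13) (by simpa using hgt)

/-! ### Red and blue edges of a c-monotone drawing -/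

namespace SimpleDrawing

variable {n : ℕ}

/-- `O` is a centre of c-monotonicity of `D`, and vertex `i` has log-polar coordinates
`(θ i, ρ i)` about `O`, with angles normalised to `(-π, π]`. -/
structure Coords (D : SimpleDrawing n) (O : Pt) (θ ρ : Fin n → ℝ) : Prop where
  mono : D.CMonotoneAt O
  vtx_eq : ∀ i, D.vtx i = polarPt O (θ i) (ρ i)
  mem : ∀ i, θ i ∈ Ioc (-Real.pi) Real.pi

/-- For `θ i < θ j`: the edge `ij` sweeps the angles from `θ j` to `θ i + 2π`, that is, it
crosses the ray of angle `π`. -/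
def IsRed (D : SimpleDrawing n) (O : Pt) (θ ρ : Fin n → ℝ) (i j : Fin n) : Prop :=
  IsPolarGraph O (D.arc i j) (θ j) (ρ j) (θ i + 2 * Real.pi) (ρ i)

variable {D : SimpleDrawing n} {O : Pt} {θ ρ : Fin n → ℝ}

lemma vtx_mem_left {i j : Fin n} (hij : i ≠ j) : D.vtx i ∈ D.arc i j := by
  obtain ⟨f, -, -, hf0, -, hA⟩ := D.arc_simple i j hij
  exact hA ▸ ⟨0, by simp, hf0⟩

lemma vtx_mem_right {i j : Fin n} (hij : i ≠ j) : D.vtx j ∈ D.arc i j :=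
  D.arc_symm i j ▸ vtx_mem_left hij.symm

lemma notMem_arc (h : D.CMonotoneAt O) {i j : Fin n} (hij : i ≠ j) : O ∉ D.arc i j := fun hO =>
  h.1 (by simp only [drawingSet, mem_iUnion]; exact ⟨i, j, hij, hO⟩)

lemma Coords.angle_inj (h : Coords D O θ ρ) : Function.Injective θ := by
  intro i j hij
  by_contra hne
  refine hne (D.vtx_inj (h.mono.2 _ (cos_sin_ne_zero (θ i)) i j hne
    ⟨?_, vtx_mem_left hne⟩ ⟨?_, vtx_mem_right hne⟩))
  · rw [h.vtx_eq i]
    exact polarPt_mem_ray _ _ _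
  · rw [h.vtx_eq j, hij]
    exact polarPt_mem_ray _ _ _

lemma Coords.lt_add (h : Coords D O θ ρ) (i j : Fin n) : θ j < θ i + 2 * Real.pi := by
  have h1 := (h.mem i).1
  have h2 := (h.mem j).2
  linarith

lemma Coords.blue_or_red (h : Coords D O θ ρ) {i j : Fin n} (hij : θ i < θ j) :
    IsPolarGraph O (D.arc i j) (θ i) (ρ i) (θ j) (ρ j) ∨ D.IsRed O θ ρ i j := by
  have hne : i ≠ j := by rintro rfl; exact lt_irrefl _ hij
  exact polarGraph_or (D.arc_simple i j hne) (notMem_arc h.mono hne)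
    (fun d hd => h.mono.2 d hd i j hne) (h.vtx_eq i) (h.vtx_eq j) hij (h.lt_add i j)

/-- Coinciding points whose angles differ by less than a full turn have equal log-polar
coordinates. -/
lemma eq_of_polarPt_eq {x y r s : ℝ} (hp : polarPt O x r = polarPt O y s)
    (h1 : x < y + 2 * Real.pi) (h2 : y < x + 2 * Real.pi) : x = y ∧ r = s := by
  obtain ⟨hr, m, hm⟩ := polarPt_inj hp
  have hpi := Real.pi_pos
  have h3 : (m : ℝ) < 1 := by
    by_contra! hcon
    nlinarith
  have h4 : (-1 : ℝ) < m := by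
    by_contra! hcon
    nlinarith
  have h5 : m < 1 := by exact_mod_cast h3
  have h6 : -1 < m := by exact_mod_cast h4
  obtain rfl : m = 0 := by omega
  exact ⟨by simpa using hm, hr⟩

/-- Edges sharing a vertex do not meet at an angle different from that of the vertex. -/
lemma Coords.adj_ne (h : Coords D O θ ρ) {i j k : Fin n} (hij : i ≠ j) (hik : i ≠ k)
    (hjk : j ≠ k) {x r s : ℝ} (h1 : θ i < x) (h2 : x < θ i + 2 * Real.pi)
    (hr : polarPt O x r ∈ D.arc i j) (hs : polarPt O x s ∈ D.arc i k) : r ≠ s := by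
  rintro rfl
  have hmem : polarPt O x r ∈ D.arc i j ∩ D.arc i k := ⟨hr, hs⟩
  rw [D.adj_inter i j k hij hik hjk, mem_singleton_iff, h.vtx_eq i] at hmem
  exact h1.ne' (eq_of_polarPt_eq hmem h2 (by linarith [Real.pi_pos])).1

/-- Redness is transitive along increasing angles. -/
lemma Coords.red_trans (h : Coords D O θ ρ) {i j k : Fin n} (hij : θ i < θ j) (hjk : θ j < θ k)
    (rij : D.IsRed O θ ρ i j) (rjk : D.IsRed O θ ρ j k) : D.IsRed O θ ρ i k := by
  refine (h.blue_or_red (hij.trans hjk)).resolve_left ?_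
  rintro ⟨g, cg, sg, eg, hg⟩
  obtain ⟨f, cf, sf, ef, hf⟩ := rij
  obtain ⟨f', cf', sf', ef', hf'⟩ := rjk
  have nij : i ≠ j := by rintro rfl; exact lt_irrefl _ hij
  have njk : j ≠ k := by rintro rfl; exact lt_irrefl _ hjk
  have nik : i ≠ k := by rintro rfl; exact lt_asymm hij hjk
  have hki := h.lt_add i k
  refine winding (T := 2 * Real.pi) hij hjk hki cf cf' cg sf ef sf' ef' sg eg ?_ ?_ ?_
  · rintro x ⟨h1, h2⟩
    refine h.adj_ne nij.symm njk nik (x := x) (by linarith) (by linarith) ?_ ?_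
    · rw [D.arc_symm, hf]; exact ⟨x, ⟨by linarith, by linarith⟩, rfl⟩
    · rw [hf']; exact ⟨x, ⟨by linarith, by linarith⟩, rfl⟩
  · rintro x ⟨h1, h2⟩
    refine h.adj_ne nij nik njk (x := x) (by linarith) (by linarith) ?_ ?_
    · rw [hf]; exact ⟨x, ⟨by linarith, by linarith⟩, rfl⟩
    · rw [hg]; exact ⟨x, ⟨by linarith, by linarith⟩, rfl⟩
  · rintro x ⟨h1, h2⟩
    refine h.adj_ne njk.symm nik.symm nij.symm (x := x + 2 * Real.pi)
      (by linarith) (by linarith) ?_ ?_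
    · rw [D.arc_symm, hf']; exact ⟨_, ⟨by linarith, by linarith⟩, rfl⟩
    · rw [D.arc_symm, hg, polarPt_add_two_pi]; exact ⟨x, ⟨by linarith, by linarith⟩, rfl⟩

/-- Among four vertices in angular order `i, j, k, l` with red edges, `ik` and `jl` are
disjoint. -/
lemma Coords.red_disjoint (h : Coords D O θ ρ) {i j k l : Fin n} (hij : θ i < θ j)
    (hjk : θ j < θ k) (hkl : θ k < θ l)
    (rij : D.IsRed O θ ρ i j) (rik : D.IsRed O θ ρ i k) (ril : D.IsRed O θ ρ i l)
    (rjl : D.IsRed O θ ρ j l) (rkl : D.IsRed O θ ρ k l) :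
    Disjoint (D.arc i k) (D.arc j l) := by
  obtain ⟨f12, c12, s12, e12, h12⟩ := rij
  obtain ⟨f13, c13, s13, e13, h13⟩ := rik
  obtain ⟨f14, c14, s14, e14, h14⟩ := ril
  obtain ⟨f24, c24, s24, e24, h24⟩ := rjl
  obtain ⟨f34, c34, s34, e34, h34⟩ := rkl
  have n12 : i ≠ j := by rintro rfl; exact lt_irrefl _ hij
  have n13 : i ≠ k := by rintro rfl; linarith
  have n14 : i ≠ l := by rintro rfl; linarith
  have n23 : j ≠ k := by rintro rfl; linarith
  have n24 : j ≠ l := by rintro rfl; linarith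
  have n34 : k ≠ l := by rintro rfl; linarith
  have hli := h.lt_add i l
  have m12 : ∀ x, θ j ≤ x → x ≤ θ i + 2 * Real.pi → polarPt O x (f12 x) ∈ D.arc i j :=
    fun x h1 h2 => h12 ▸ ⟨x, ⟨h1, h2⟩, rfl⟩
  have m13 : ∀ x, θ k ≤ x → x ≤ θ i + 2 * Real.pi → polarPt O x (f13 x) ∈ D.arc i k :=
    fun x h1 h2 => h13 ▸ ⟨x, ⟨h1, h2⟩, rfl⟩
  have m14 : ∀ x, θ l ≤ x → x ≤ θ i + 2 * Real.pi → polarPt O x (f14 x) ∈ D.arc i l :=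
    fun x h1 h2 => h14 ▸ ⟨x, ⟨h1, h2⟩, rfl⟩
  have m24 : ∀ x, θ l ≤ x → x ≤ θ j + 2 * Real.pi → polarPt O x (f24 x) ∈ D.arc j l :=
    fun x h1 h2 => h24 ▸ ⟨x, ⟨h1, h2⟩, rfl⟩
  have m34 : ∀ x, θ l ≤ x → x ≤ θ k + 2 * Real.pi → polarPt O x (f34 x) ∈ D.arc k l :=
    fun x h1 h2 => h34 ▸ ⟨x, ⟨h1, h2⟩, rfl⟩
  have key : ∀ x ∈ Icc (θ l) (θ i + 2 * Real.pi), f13 x ≠ f24 x := by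
    intro x hx
    refine ne_of_four (T := 2 * Real.pi) hij hjk hkl hli c12 c13 c14 c24 c34 s12 e12 s13 e13
      s14 e14 s24 e24 s34 e34 ?_ ?_ ?_ ?_ ?_ ?_ ?_ hx
    · rintro x ⟨h1, h2⟩
      exact h.adj_ne n13 n14 n34 (x := x) (by linarith) (by linarith)
        (m13 x (by linarith) (by linarith)) (m14 x (by linarith) (by linarith))
    · rintro x ⟨h1, h2⟩
      exact h.adj_ne n14.symm n24.symm n12 (x := x) (by linarith) (by linarith)
        (D.arc_symm i l ▸ m14 x (by linarith) (by linarith))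
        (D.arc_symm j l ▸ m24 x (by linarith) (by linarith))
    · rintro x ⟨h1, h2⟩
      exact h.adj_ne n13.symm n34 n14 (x := x) (by linarith) (by linarith)
        (D.arc_symm i k ▸ m13 x (by linarith) (by linarith))
        (m34 x (by linarith) (by linarith))
    · rintro x ⟨h1, h2⟩
      exact h.adj_ne n12.symm n24 n14 (x := x) (by linarith) (by linarith)
        (D.arc_symm i j ▸ m12 x (by linarith) (by linarith))
        (m24 x (by linarith) (by linarith))
    · rintro x ⟨h1, h2⟩
      exact h.adj_ne n12 n13 n23 (x := x) (by linarith) (by linarith)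
        (m12 x (by linarith) (by linarith)) (m13 x (by linarith) (by linarith))
    · rintro x ⟨h1, h2⟩
      exact h.adj_ne n24.symm n34.symm n23 (x := x) (by linarith) (by linarith)
        (D.arc_symm j l ▸ m24 x (by linarith) (by linarith))
        (D.arc_symm k l ▸ m34 x (by linarith) (by linarith))
    · rintro x ⟨h1, h2⟩ y ⟨h3, h4⟩ hx hy
      -- the edges `ij` and `kl` meet at most once, but `x` and `y` lie on different rays
      have p1 := m34 x (by linarith) (by linarith)
      rw [← hx] at p1
      have p2 := m34 (y + 2 * Real.pi) (by linarith) (by linarith)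
      rw [← hy, polarPt_add_two_pi] at p2
      have := D.indep_inter i j k l n12 n34 n13 n14 n23 n24
        ⟨m12 x (by linarith) (by linarith), p1⟩ ⟨m12 y (by linarith) (by linarith), p2⟩
      linarith [(eq_of_polarPt_eq this (by linarith) (by linarith)).1]
  rw [Set.disjoint_left, h13, h24]
  rintro _ ⟨x, ⟨h1, h2⟩, rfl⟩ ⟨y, ⟨h3, h4⟩, hy⟩
  obtain ⟨rfl, he⟩ := eq_of_polarPt_eq hy (by linarith) (by linarith)
  exact key y ⟨h3, h2⟩ he.symm

lemma Coords.blue_disjoint (h : Coords D O θ ρ) {i j k l : Fin n} (hij : θ i < θ j)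
    (hjk : θ j < θ k) (hkl : θ k < θ l)
    (bij : ¬ D.IsRed O θ ρ i j) (bkl : ¬ D.IsRed O θ ρ k l) :
    Disjoint (D.arc i j) (D.arc k l) := by
  obtain ⟨f, -, -, -, hf⟩ := (h.blue_or_red hij).resolve_right bij
  obtain ⟨g, -, -, -, hg⟩ := (h.blue_or_red hkl).resolve_right bkl
  have hli := h.lt_add i l
  rw [Set.disjoint_left, hf, hg]
  rintro _ ⟨x, ⟨h1, h2⟩, rfl⟩ ⟨y, ⟨h3, h4⟩, hy⟩
  linarith [(eq_of_polarPt_eq hy (by linarith) (by linarith)).1]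

lemma exists_coords (hn : 2 ≤ n) (h : D.CMonotoneAt O) : ∃ θ ρ, Coords D O θ ρ := by
  have hne : ∀ i, D.vtx i ≠ O := by
    intro i hi
    have : Nontrivial (Fin n) := Fin.nontrivial_iff_two_le.2 hn
    obtain ⟨j, hj⟩ := exists_ne i
    exact notMem_arc h hj.symm (hi ▸ vtx_mem_left hj.symm)
  choose θ ρ hθ hρ using fun i => exists_polarPt (hne i)
  exact ⟨θ, ρ, h, hρ, hθ⟩

lemma Crosses.symm {i j k l : Fin n} (h : D.Crosses i j k l) : D.Crosses k l i j := by
  obtain ⟨x, h1, h2, h3⟩ := h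
  exact ⟨x, h2, h1, fun hh => h3 hh.symm⟩

/-- A path is plane as soon as its non-consecutive edges are disjoint. -/
lemma plane_of_disjoint {m : ℕ} {w : Fin m → Fin n} (hw : Function.Injective w)
    (hdis : ∀ (a b : ℕ) (hab : a + 1 < b) (hb : b + 1 < m),
      Disjoint (D.arc (w ⟨a, (Nat.lt_of_succ_lt hab).trans (Nat.lt_of_succ_lt hb)⟩)
        (w ⟨a + 1, hab.trans (Nat.lt_of_succ_lt hb)⟩))
        (D.arc (w ⟨b, Nat.lt_of_succ_lt hb⟩) (w ⟨b + 1, hb⟩)))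
    (a b : ℕ) (ha : a + 1 < m) (hb : b + 1 < m) (hab : a ≠ b) :
    ¬ D.Crosses (w ⟨a, Nat.lt_of_succ_lt ha⟩) (w ⟨a + 1, ha⟩)
      (w ⟨b, Nat.lt_of_succ_lt hb⟩) (w ⟨b + 1, hb⟩) := by
  wlog hlt : a < b generalizing a b
  · exact fun hc => this b a hb ha hab.symm (by omega) hc.symm
  rintro ⟨x, hx1, hx2, hx3⟩
  rcases Nat.lt_or_ge (a + 1) b with h1 | h1
  · exact Set.disjoint_left.1 (hdis a b h1 hb) hx1 hx2
  · obtain rfl : b = a + 1 := by omega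
    have hmem : x ∈ D.arc (w ⟨a + 1, ha⟩) (w ⟨a, Nat.lt_of_succ_lt ha⟩) ∩
        D.arc (w ⟨a + 1, ha⟩) (w ⟨a + 1 + 1, hb⟩) := ⟨D.arc_symm _ _ ▸ hx1, hx2⟩
    rw [D.adj_inter _ _ _ (hw.ne (by simp)) (hw.ne (by simp)) (hw.ne (by simp; omega)),
      mem_singleton_iff] at hmem
    exact hx3 ⟨Or.inr hmem, Or.inl hmem⟩

end SimpleDrawing

/-! ### Large homogeneous sets and the zigzag path -/

/-- Dilworth-type dichotomy: if `R` is transitive along increasing `θ`, then among more than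
`k ^ 2` elements some `k + 1` are pairwise related or pairwise unrelated. -/
lemma exists_homogeneous {ι : Type*} [Fintype ι] {θ : ι → ℝ} (hθ : Function.Injective θ)
    {R : ι → ι → Prop}
    (htrans : ∀ i j k, θ i < θ j → θ j < θ k → R i j → R j k → R i k) {k : ℕ}
    (hk : k * k < Fintype.card ι) :
    ∃ w : Fin (k + 1) → ι, StrictMono (θ ∘ w) ∧
      ((∀ a b, a < b → R (w a) (w b)) ∨ (∀ a b, a < b → ¬ R (w a) (w b))) := by
  classical
  let r : ι → ι → Prop := fun i j => θ i < θ j ∧ R i j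
  have : IsStrictOrder ι r :=
    { irrefl := fun i h => lt_irrefl _ h.1
      trans := fun i j l h1 h2 => ⟨h1.1.trans h2.1, htrans i j l h1.1 h2.1 h1.2 h2.2⟩ }
  let _ : PartialOrder ι := partialOrderOfSO r
  by_cases hh : ∃ i : ι, (k : ℕ∞) ≤ Order.height i
  · obtain ⟨i, hi⟩ := hh
    obtain ⟨p, -, hp⟩ := Order.exists_series_of_le_height i hi
    subst hp
    have hlt : ∀ a b, a < b → r (p a) (p b) := fun a b hab => p.strictMono hab
    exact ⟨p, fun a b hab => (hlt a b hab).1, Or.inl fun a b hab => (hlt a b hab).2⟩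
  · push Not at hh
    -- elements of equal height are pairwise incomparable, and fewer than `k + 1` heights occur
    obtain ⟨y, -, hy⟩ := Finset.exists_lt_card_fiber_of_mul_lt_card_of_maps_to
      (s := (Finset.univ : Finset ι)) (t := Finset.range k) (n := k)
      (f := fun i => (Order.height i).toNat)
      (fun i _ => by
        have h1 := hh i
        lift Order.height i to ℕ using h1.ne_top with c
        simpa using h1) (by simpa using hk)
    set S := Finset.univ.filter fun i : ι => (Order.height i).toNat = y with hS
    obtain ⟨S', hS', hcard⟩ := Finset.exists_subset_card_eq (Nat.succ_le_of_lt hy)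
    have hc : (S'.image θ).card = k + 1 := by
      rw [Finset.card_image_of_injective _ hθ, hcard]
    have hex : ∀ a, ∃ i ∈ S', θ i = (S'.image θ).orderEmbOfFin hc a := fun a => by
      exact Finset.mem_image.1 (Finset.orderEmbOfFin_mem (S'.image θ) hc a)
    choose w hwS hw using hex
    have hwm : StrictMono (θ ∘ w) := by
      intro a b hab
      simpa [hw] using hab
    refine ⟨w, hwm, Or.inr fun a b hab hR => ?_⟩
    have hlt : w a < w b := ⟨hwm hab, hR⟩
    have ha := (Finset.mem_filter.1 (hS' (hwS a))).2
    have hb := (Finset.mem_filter.1 (hS' (hwS b))).2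
    have h1 := hh (w a)
    have h2 := hh (w b)
    have h3 := Order.height_strictMono hlt h1.lt_top
    lift Order.height (w a) to ℕ using h1.ne_top with c
    lift Order.height (w b) to ℕ using h2.ne_top with d
    simp only [ENat.toNat_natCast] at ha hb
    rw [ha, hb] at h3
    exact lt_irrefl _ h3

/-- The zigzag order `0, h, 1, h + 1, 2, …`. -/
def zigzag (h c : ℕ) : ℕ := if c % 2 = 0 then c / 2 else h + c / 2

lemma zigzag_lt {m c : ℕ} (hc : c < m) : zigzag ((m + 1) / 2) c < m := by
  unfold zigzag
  split_ifs <;> omega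

lemma zigzag_inj {m c d : ℕ} (hc : c < m) (hd : d < m)
    (h : zigzag ((m + 1) / 2) c = zigzag ((m + 1) / 2) d) : c = d := by
  unfold zigzag at h
  split_ifs at h <;> omega

namespace SimpleDrawing

variable {n : ℕ} {D : SimpleDrawing n}

/-- The `c`-th edge of the zigzag path joins vertex `(c + 1) / 2` to vertex `h + c / 2`. -/
lemma arc_zigzag {m : ℕ} (w : Fin m → Fin n) {c : ℕ} (hc : c + 1 < m) :
    D.arc (w ⟨zigzag ((m + 1) / 2) c, zigzag_lt (by omega)⟩)
        (w ⟨zigzag ((m + 1) / 2) (c + 1), zigzag_lt hc⟩) =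
      D.arc (w ⟨(c + 1) / 2, by omega⟩) (w ⟨(m + 1) / 2 + c / 2, by omega⟩) := by
  rcases Nat.even_or_odd' c with ⟨d, rfl | rfl⟩
  · congr 2 <;> (apply Fin.ext; simp only [zigzag]; split_ifs <;> omega)
  · rw [D.arc_symm]
    congr 2 <;> (apply Fin.ext; simp only [zigzag]; split_ifs <;> omega)

end SimpleDrawing

/-- Every c-monotone drawing of `K n` contains a plane path on at least
`⌈√n⌉` vertices. -/
theorem stmt_7 (n : ℕ) (D : SimpleDrawing n) (h : D.CMonotone) :
    ∃ (m : ℕ) (w : Fin m → Fin n), Function.Injective w ∧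
      Real.sqrt n ≤ (m : ℝ) ∧
      ∀ (a b : ℕ) (ha : a + 1 < m) (hb : b + 1 < m), a ≠ b →
        ¬ D.Crosses (w ⟨a, by omega⟩) (w ⟨a + 1, ha⟩)
            (w ⟨b, by omega⟩) (w ⟨b + 1, hb⟩) := by
  obtain ⟨O, hO⟩ := h
  rcases Nat.lt_or_ge n 2 with hn | hn
  · -- with at most one vertex there are no edges, and the centre may even be the vertex itself
    refine ⟨n, id, Function.injective_id, ?_, fun a b ha hb => by omega⟩
    interval_cases n <;> simp
  obtain ⟨θ, ρ, hc⟩ := SimpleDrawing.exists_coords hn hO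
  obtain ⟨k, hk⟩ : ∃ k, ⌈Real.sqrt n⌉₊ = k + 1 := by
    refine Nat.exists_eq_succ_of_ne_zero (Nat.ceil_pos.2 ?_).ne'
    exact Real.sqrt_pos.2 (by exact_mod_cast (by omega : 0 < n))
  have hkn : k * k < n := by
    have h1 : (k : ℝ) < Real.sqrt n := Nat.lt_ceil.1 (by omega)
    have h2 := Real.lt_sqrt (Nat.cast_nonneg k) |>.1 h1
    rw [sq] at h2
    exact_mod_cast h2
  have hle : Real.sqrt n ≤ ((k + 1 : ℕ) : ℝ) := hk ▸ Nat.le_ceil _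
  obtain ⟨w, hw, hR | hB⟩ := exists_homogeneous hc.angle_inj
    (R := D.IsRed O θ ρ) (fun i j l => hc.red_trans) (k := k) (by simpa using hkn)
  · have hwi : Function.Injective w := fun a b hab => hw.injective (congrArg θ hab)
    have hz : Function.Injective fun c : Fin (k + 1) =>
        w ⟨zigzag ((k + 1 + 1) / 2) c, zigzag_lt c.2⟩ := fun c d hcd =>
      Fin.ext (zigzag_inj c.2 d.2 (congrArg Fin.val (hwi hcd)))
    refine ⟨k + 1, _, hz, hle, SimpleDrawing.plane_of_disjoint hz fun a b hab hb => ?_⟩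
    simp only
    rw [SimpleDrawing.arc_zigzag w (by omega), SimpleDrawing.arc_zigzag w hb]
    exact hc.red_disjoint (hw (Fin.mk_lt_mk.2 (by omega))) (hw (Fin.mk_lt_mk.2 (by omega)))
      (hw (Fin.mk_lt_mk.2 (by omega))) (hR _ _ (Fin.mk_lt_mk.2 (by omega)))
      (hR _ _ (Fin.mk_lt_mk.2 (by omega))) (hR _ _ (Fin.mk_lt_mk.2 (by omega)))
      (hR _ _ (Fin.mk_lt_mk.2 (by omega))) (hR _ _ (Fin.mk_lt_mk.2 (by omega)))
  · have hwi : Function.Injective w := fun a b hab => hw.injective (congrArg θ hab)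
    refine ⟨k + 1, w, hwi, hle, SimpleDrawing.plane_of_disjoint hwi fun a b hab hb => ?_⟩
    exact hc.blue_disjoint (hw (Fin.mk_lt_mk.2 (by omega)))
      (hw (Fin.mk_lt_mk.2 (by omega))) (hw (Fin.mk_lt_mk.2 (by omega)))
      (hB _ _ (Fin.mk_lt_mk.2 (by omega))) (hB _ _ (Fin.mk_lt_mk.2 (by omega)))
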